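/- Let n ≥ 3, μ > 0, m₀ > 0, R > 0, and v₀ ∈ ℝ, and set A := 2μ m₀/(n−2) and C := v₀² − A/R^{n−2}. Suppose C < 0. Then any twice continuously differentiable X : [0,T) → (0,∞) with X''(t) = −μ m₀ / X(t)^{n−1}, X(0) = R, X'(0) = v₀ satisfies X(t) ≤ (A/|C|)^{1/(n−2)} for all t ∈ [0,T); moreover there is no such solution with T = ∞: every positive solution reaches zero in finite time. -/

import Mathlib

open Set

/-!
The energy `C = X' ^ 2 - A / X ^ (n - 2)` is conserved along a characteristic. If it is negative,
then `A / X ^ (n - 2) ≥ |C|`, which confines `X` below `B = (A / |C|) ^ (1 / (n - 2))`. On the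
confined range the attraction is at least as strong as at `B`, so `X''` is bounded above by a
negative constant, and two integrations drive `X` to `-∞`, which a global positive solution
cannot do.
-/

open Filter

theorem rpow_natCast_sub_natCast {n k : ℕ} (hk : k ≤ n) (x : ℝ) :
    x ^ ((n : ℝ) - k) = x ^ (n - k) := by
  rw [← Nat.cast_sub hk, Real.rpow_natCast]

theorem energy_eq_of_hasDerivWithinAt {D : Set ℝ} (hD : Convex ℝ D) {X X' V V' : ℝ → ℝ}
    (hX : ∀ t ∈ D, HasDerivWithinAt X (X' t) D t)
    (hX' : ∀ t ∈ D, HasDerivWithinAt X' (-V' (X t)) D t)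
    (hV : ∀ t ∈ D, HasDerivAt V (V' (X t)) (X t)) {s t : ℝ} (hs : s ∈ D) (ht : t ∈ D) :
    X' s ^ 2 + 2 * V (X s) = X' t ^ 2 + 2 * V (X t) := by
  have energy_deriv : ∀ r ∈ D,
      HasDerivWithinAt (fun r ↦ X' r ^ 2 + 2 * V (X r)) 0 D r := by
    intro r hr
    have potential_deriv : HasDerivWithinAt (fun r ↦ V (X r)) (V' (X r) * X' r) D r :=
      (hV r hr).comp_hasDerivWithinAt r (hX r hr)
    refine (((hX' r hr).fun_pow 2).fun_add (potential_deriv.const_mul 2)).congr_deriv ?_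
    ring
  have norm_sub_le := hD.norm_image_sub_le_of_norm_hasDerivWithin_le energy_deriv
    (fun _ _ ↦ norm_zero.le) ht hs
  rwa [zero_mul, norm_le_zero_iff, sub_eq_zero] at norm_sub_le

theorem le_of_hasDerivWithinAt_Ici_le {a : ℝ} {f f' g g' : ℝ → ℝ}
    (hf : ∀ t ∈ Ici a, HasDerivWithinAt f (f' t) (Ici a) t)
    (hg : ∀ t ∈ Ici a, HasDerivWithinAt g (g' t) (Ici a) t)
    (hfg' : ∀ t ∈ Ici a, f' t ≤ g' t) (hfg : f a ≤ g a) {t : ℝ} (ht : t ∈ Ici a) :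
    f t ≤ g t :=
  image_le_of_deriv_right_le_deriv_boundary
    (fun s hs ↦ (hf s hs.1).continuousWithinAt.mono Icc_subset_Ici_self)
    (fun s hs ↦ (hf s hs.1).mono (Ici_subset_Ici.2 hs.1)) hfg
    (fun s hs ↦ (hg s hs.1).continuousWithinAt.mono Icc_subset_Ici_self)
    (fun s hs ↦ (hg s hs.1).mono (Ici_subset_Ici.2 hs.1))
    (fun s hs ↦ hfg' s hs.1) ⟨ht, le_rfl⟩

theorem le_quadratic_of_second_deriv_le_neg {X X' X'' : ℝ → ℝ} {c : ℝ}
    (hX : ∀ t ∈ Ici (0 : ℝ), HasDerivWithinAt X (X' t) (Ici 0) t)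
    (hX' : ∀ t ∈ Ici (0 : ℝ), HasDerivWithinAt X' (X'' t) (Ici 0) t)
    (hX'' : ∀ t ∈ Ici (0 : ℝ), X'' t ≤ -c) {t : ℝ} (ht : t ∈ Ici (0 : ℝ)) :
    X t ≤ X 0 + t * (X' 0 - c / 2 * t) := by
  have velocity_le : ∀ s ∈ Ici (0 : ℝ), X' s ≤ X' 0 - c * s := by
    intro s hs
    refine le_of_hasDerivWithinAt_Ici_le (g := fun s ↦ X' 0 - c * s) hX' (fun r _ ↦ ?_) hX''
      (by simp) hs
    simpa using ((hasDerivWithinAt_id r (Ici 0)).const_mul c).const_sub (X' 0)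
  refine le_of_hasDerivWithinAt_Ici_le (g := fun s ↦ X 0 + s * (X' 0 - c / 2 * s)) hX
    (fun r _ ↦ ?_) velocity_le (by simp) ht
  have linear_deriv := ((hasDerivWithinAt_id r (Ici 0)).const_mul (c / 2)).const_sub (X' 0)
  refine (((hasDerivWithinAt_id r (Ici 0)).fun_mul linear_deriv).const_add (X 0)).congr_deriv ?_
  simp only [id_eq]
  ring

theorem tendsto_atBot_of_second_deriv_le_neg {X X' X'' : ℝ → ℝ} {c : ℝ} (hc : 0 < c)
    (hX : ∀ t ∈ Ici (0 : ℝ), HasDerivWithinAt X (X' t) (Ici 0) t)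
    (hX' : ∀ t ∈ Ici (0 : ℝ), HasDerivWithinAt X' (X'' t) (Ici 0) t)
    (hX'' : ∀ t ∈ Ici (0 : ℝ), X'' t ≤ -c) :
    Tendsto X atTop atBot := by
  have slope_tendsto : Tendsto (fun t ↦ X' 0 - c / 2 * t) atTop atBot :=
    tendsto_atBot_add_const_left _ _
      (tendsto_neg_atTop_atBot.comp (tendsto_id.const_mul_atTop (half_pos hc)))
  refine tendsto_atBot_mono' atTop ?_
    (tendsto_atBot_add_const_left _ (X 0) (tendsto_id.atTop_mul_atBot₀ slope_tendsto))
  filter_upwards [mem_atTop (0 : ℝ)] with t ht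
  exact le_quadratic_of_second_deriv_le_neg hX hX' hX'' ht

/-- `X` is a positive solution on `D`, with velocity `X'`, of the radial characteristic equation
`X'' = -κ / X ^ (n - 1)`. The dimension `n` is allowed to be any real number, and
`κ` stands for the product `μ * m₀` of the coupling constant and the enclosed mass. -/
structure IsRadialCharacteristic (n κ : ℝ) (D : Set ℝ) (X X' : ℝ → ℝ) : Prop where
  pos : ∀ t ∈ D, 0 < X t
  hasDerivWithinAt : ∀ t ∈ D, HasDerivWithinAt X (X' t) D t
  hasDerivWithinAt_velocity : ∀ t ∈ D, HasDerivWithinAt X' (-κ / X t ^ (n - 1)) D t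

/-- The critical-threshold functional at radius `x` and velocity `v`: twice the mechanical energy
per unit mass in the potential of the force `-κ / x ^ (n - 1)`. -/
noncomputable def radialEnergy (n κ x v : ℝ) : ℝ :=
  v ^ 2 - 2 * κ / (n - 2) / x ^ (n - 2)

theorem hasDerivAt_radialPotential {n : ℝ} (hn : n ≠ 2) (κ : ℝ) {x : ℝ} (hx : 0 < x) :
    HasDerivAt (fun x ↦ -(κ / (n - 2) / x ^ (n - 2))) (κ / x ^ (n - 1)) x := by
  have hn' : n - 2 ≠ 0 := sub_ne_zero.2 hn
  have inv_pow_deriv := (Real.hasDerivAt_rpow_const (p := -(n - 2)) (Or.inl hx.ne')).const_mul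
    (-(κ / (n - 2)))
  refine (inv_pow_deriv.congr_deriv ?_).congr_of_eventuallyEq ?_
  · rw [show -(n - 2) - 1 = -(n - 1) by ring, Real.rpow_neg hx.le]
    field_simp
  · filter_upwards [lt_mem_nhds hx] with y hy
    rw [Real.rpow_neg hy.le]
    ring

theorem rpow_le_of_radialEnergy_neg {n κ x v : ℝ} (hx : 0 < x) (hE : radialEnergy n κ x v < 0) :
    x ^ (n - 2) ≤ 2 * κ / (n - 2) / |radialEnergy n κ x v| := by
  have abs_energy_le : |radialEnergy n κ x v| ≤ 2 * κ / (n - 2) / x ^ (n - 2) := by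
    rw [abs_of_neg hE, radialEnergy]
    linarith [sq_nonneg v]
  exact (le_div_comm₀ (abs_pos.2 hE.ne) (Real.rpow_pos_of_pos hx _)).1 abs_energy_le

theorem le_rpow_of_radialEnergy_neg {n κ x v : ℝ} (hn : 2 < n) (hx : 0 < x)
    (hE : radialEnergy n κ x v < 0) :
    x ≤ (2 * κ / (n - 2) / |radialEnergy n κ x v|) ^ (1 / (n - 2)) := by
  have rpow_le := rpow_le_of_radialEnergy_neg hx hE
  rw [one_div]
  exact (Real.le_rpow_inv_iff_of_pos hx.le ((Real.rpow_nonneg hx.le _).trans rpow_le)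
    (sub_pos.2 hn)).2 rpow_le

theorem pos_of_radialEnergy_neg {n κ x v : ℝ} (hn : 2 < n) (hx : 0 < x)
    (hE : radialEnergy n κ x v < 0) : 0 < κ := by
  have ratio_pos := (Real.rpow_pos_of_pos hx (n - 2)).trans_le (rpow_le_of_radialEnergy_neg hx hE)
  rw [div_pos_iff_of_pos_right (abs_pos.2 hE.ne), div_pos_iff_of_pos_right (sub_pos.2 hn)]
    at ratio_pos
  linarith

namespace IsRadialCharacteristic

variable {n κ : ℝ} {D : Set ℝ} {X X' : ℝ → ℝ}

theorem radialEnergy_eq (h : IsRadialCharacteristic n κ D X X') (hn : n ≠ 2) (hD : Convex ℝ D)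
    {s t : ℝ} (hs : s ∈ D) (ht : t ∈ D) :
    radialEnergy n κ (X s) (X' s) = radialEnergy n κ (X t) (X' t) := by
  have energy_eq := energy_eq_of_hasDerivWithinAt hD h.hasDerivWithinAt
    (V' := fun x ↦ κ / x ^ (n - 1))
    (fun t ht ↦ (h.hasDerivWithinAt_velocity t ht).congr_deriv (neg_div _ _))
    (fun t ht ↦ hasDerivAt_radialPotential hn κ (h.pos t ht)) hs ht
  unfold radialEnergy
  linear_combination energy_eq

theorem le_of_radialEnergy_neg (h : IsRadialCharacteristic n κ D X X') (hn : 2 < n)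
    (hD : Convex ℝ D) {s t : ℝ} (hs : s ∈ D) (ht : t ∈ D)
    (hE : radialEnergy n κ (X s) (X' s) < 0) :
    X t ≤ (2 * κ / (n - 2) / |radialEnergy n κ (X s) (X' s)|) ^ (1 / (n - 2)) := by
  rw [h.radialEnergy_eq hn.ne' hD hs ht] at hE ⊢
  exact le_rpow_of_radialEnergy_neg hn (h.pos t ht) hE

theorem not_bddAbove (h : IsRadialCharacteristic n κ (Ici 0) X X') (hn : 1 ≤ n) (hκ : 0 < κ) :
    ¬ BddAbove (X '' Ici 0) := by
  rintro ⟨B, hB⟩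
  have le_B : ∀ t ∈ Ici (0 : ℝ), X t ≤ B := fun t ht ↦ hB (mem_image_of_mem X ht)
  have B_pos : 0 < B := (h.pos 0 self_mem_Ici).trans_le (le_B 0 self_mem_Ici)
  have acceleration_le : ∀ t ∈ Ici (0 : ℝ), -κ / X t ^ (n - 1) ≤ -(κ / B ^ (n - 1)) := by
    intro t ht
    have rpow_le := Real.rpow_le_rpow (h.pos t ht).le (le_B t ht) (sub_nonneg.2 hn)
    have rpow_pos := Real.rpow_pos_of_pos (h.pos t ht) (n - 1)
    rw [neg_div]
    gcongr
  have X_tendsto : Tendsto X atTop atBot :=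
    tendsto_atBot_of_second_deriv_le_neg (div_pos hκ (Real.rpow_pos_of_pos B_pos _))
      h.hasDerivWithinAt h.hasDerivWithinAt_velocity acceleration_le
  obtain ⟨t, X_nonpos, ht⟩ :=
    ((X_tendsto.eventually_le_atBot 0).and (eventually_ge_atTop 0)).exists
  exact (h.pos t ht).not_ge X_nonpos

theorem radialEnergy_nonneg (h : IsRadialCharacteristic n κ (Ici 0) X X') (hn : 2 < n) :
    0 ≤ radialEnergy n κ (X 0) (X' 0) := by
  by_contra! hE
  have κ_pos : 0 < κ := pos_of_radialEnergy_neg hn (h.pos 0 self_mem_Ici) hE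
  have X_bddAbove : BddAbove (X '' Ici 0) := ⟨_, forall_mem_image.2 fun _ ht ↦
    h.le_of_radialEnergy_neg hn (convex_Ici 0) self_mem_Ici ht hE⟩
  exact h.not_bddAbove (by linarith) κ_pos X_bddAbove

end IsRadialCharacteristic

theorem stmt8_general {n κ R v₀ A C : ℝ} (hn : 2 < n)
    (hA : A = 2 * κ / (n - 2)) (hC : C = v₀ ^ 2 - A / R ^ (n - 2)) (hCneg : C < 0) :
    (∀ T : ℝ, 0 < T → ∀ X X' : ℝ → ℝ,
        (∀ t ∈ Ico (0 : ℝ) T, 0 < X t) →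
        (∀ t ∈ Ico (0 : ℝ) T, HasDerivWithinAt X (X' t) (Ico 0 T) t) →
        (∀ t ∈ Ico (0 : ℝ) T, HasDerivWithinAt X' (-κ / X t ^ (n - 1)) (Ico 0 T) t) →
        X 0 = R → X' 0 = v₀ →
        ∀ t ∈ Ico (0 : ℝ) T, X t ≤ (A / |C|) ^ (1 / (n - 2))) ∧
    (¬ ∃ X X' : ℝ → ℝ,
        (∀ t ∈ Ici (0 : ℝ), 0 < X t) ∧
        (∀ t ∈ Ici (0 : ℝ), HasDerivWithinAt X (X' t) (Ici 0) t) ∧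
        (∀ t ∈ Ici (0 : ℝ), HasDerivWithinAt X' (-κ / X t ^ (n - 1)) (Ici 0) t) ∧
        X 0 = R ∧ X' 0 = v₀) := by
  subst hA
  change C = radialEnergy n κ R v₀ at hC
  subst hC
  constructor
  · rintro T hT X X' hpos hX hX' rfl rfl t ht
    have h : IsRadialCharacteristic n κ (Ico 0 T) X X' := ⟨hpos, hX, hX'⟩
    exact h.le_of_radialEnergy_neg hn (convex_Ico 0 T) (left_mem_Ico.2 hT) ht hCneg
  · rintro ⟨X, X', hpos, hX, hX', rfl, rfl⟩
    have h : IsRadialCharacteristic n κ (Ici 0) X X' := ⟨hpos, hX, hX'⟩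
    exact (h.radialEnergy_nonneg hn).not_gt hCneg

/-- Below the critical threshold (`C < 0`) the characteristic of the attractive radial
Euler–Poisson system stays below `(A/|C|)^{1/(n-2)}` and cannot be global: finite-time
breakdown occurs. -/
theorem stmt8 (n : ℕ) (hn : 3 ≤ n) (μ : ℝ) (hμ : 0 < μ) (m₀ : ℝ) (hm₀ : 0 < m₀)
    (R : ℝ) (hR : 0 < R) (v₀ : ℝ) (A C : ℝ)
    (hA : A = 2 * μ * m₀ / ((n : ℝ) - 2)) (hC : C = v₀ ^ 2 - A / R ^ (n - 2))
    (hCneg : C < 0) :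
    (∀ T : ℝ, 0 < T → ∀ X X' : ℝ → ℝ,
        (∀ t ∈ Ico (0:ℝ) T, 0 < X t) →
        (∀ t ∈ Ico (0:ℝ) T, HasDerivWithinAt X (X' t) (Ico 0 T) t) →
        (∀ t ∈ Ico (0:ℝ) T, HasDerivWithinAt X' (-μ * m₀ / X t ^ (n - 1)) (Ico 0 T) t) →
        X 0 = R → X' 0 = v₀ →
        ∀ t ∈ Ico (0:ℝ) T, X t ≤ (A / |C|) ^ ((1:ℝ) / ((n : ℝ) - 2))) ∧
    (¬ ∃ X X' : ℝ → ℝ,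
        (∀ t ∈ Ici (0:ℝ), 0 < X t) ∧
        (∀ t ∈ Ici (0:ℝ), HasDerivWithinAt X (X' t) (Ici 0) t) ∧
        (∀ t ∈ Ici (0:ℝ), HasDerivWithinAt X' (-μ * m₀ / X t ^ (n - 1)) (Ici 0) t) ∧
        X 0 = R ∧ X' 0 = v₀) := by
  have rpow_sub_one (x : ℝ) : x ^ ((n : ℝ) - 1) = x ^ (n - 1) :=
    mod_cast rpow_natCast_sub_natCast (k := 1) (by lia) x
  have rpow_sub_two : R ^ ((n : ℝ) - 2) = R ^ (n - 2) :=
    mod_cast rpow_natCast_sub_natCast (k := 2) (by lia) R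
  simpa only [rpow_sub_one, neg_mul] using stmt8_general (n := n) (κ := μ * m₀)
    (mod_cast hn) (by rwa [← mul_assoc]) (by rwa [rpow_sub_two]) hCneg
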